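/- arXiv:0706.1287 — 6 statements merged into one kernel-verified Lean document; each statement's English description precedes it below -/
import Mathlib

section
/- For every natural number p ≥ 4, the number of non-chordal simple graphs on the labeled vertex set Fin p having exactly 4 edges equals 3 · C(p,4). (Paper's Lemma 2, part 1: F_{p,4} = binom(p,4) × 3.) -/
/-- A simple graph is chordal ("decomposable") if for every `n ≥ 4` there is no
graph embedding (induced subgraph copy) of the `n`-cycle into it. -/
def IsChordal {V : Type*} (G : SimpleGraph V) : Prop :=
  ∀ n : ℕ, 4 ≤ n → IsEmpty (SimpleGraph.cycleGraph n ↪g G)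

/-- `Fcount p k` is the number of non-chordal simple graphs on `Fin p` with exactly `k` edges. -/
noncomputable def Fcount (p k : ℕ) : ℕ :=
  Nat.card {G : SimpleGraph (Fin p) // G.edgeSet.ncard = k ∧ ¬ IsChordal G}

open SimpleGraph in
theorem cyc_edges (n : ℕ) : (cycleGraph (n + 3)).edgeSet.ncard = n + 3 := by
  have h := (cycleGraph (n + 3)).sum_degrees_eq_twice_card_edges
  simp only [cycleGraph_degree_three_le] at h
  rw [← coe_edgeFinset, Set.ncard_coe_finset]
  simp at h
  omega

open SimpleGraph in
theorem map_edges {V W : Type*} (G : SimpleGraph V) (f : V ↪ W) :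
    (G.map f).edgeSet.ncard = G.edgeSet.ncard := by
  rw [SimpleGraph.edgeSet_map]
  exact Set.ncard_image_of_injective _ f.sym2Map.injective

open SimpleGraph in
theorem nonchordal_iff (p : ℕ) (G : SimpleGraph (Fin p)) :
    (G.edgeSet.ncard = 4 ∧ ¬ IsChordal G) ↔
      ∃ f : Fin 4 ↪ Fin p, G = (cycleGraph 4).map f := by
  constructor
  · rintro ⟨h4, hc⟩
    unfold IsChordal at hc
    push Not at hc
    obtain ⟨n, hn, ⟨f⟩⟩ := hc
    obtain ⟨m, rfl⟩ : ∃ m, n = m + 3 := ⟨n - 3, by omega⟩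
    have hle : (cycleGraph (m + 3)).map f.toEmbedding ≤ G := by
      rw [SimpleGraph.map_le_iff_le_comap]
      intro u v h
      exact f.map_adj_iff.2 h
    have hsub := SimpleGraph.edgeSet_mono hle
    have hcard := (map_edges (cycleGraph (m + 3)) f.toEmbedding).trans (cyc_edges m)
    have := Set.ncard_le_ncard hsub (Set.toFinite _)
    obtain rfl : m = 1 := by omega
    refine ⟨f.toEmbedding, ?_⟩
    have := Set.eq_of_subset_of_ncard_le hsub (by omega) (Set.toFinite _)
    exact (SimpleGraph.edgeSet_injective this).symm
  · rintro ⟨f, rfl⟩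
    refine ⟨(map_edges _ _).trans (cyc_edges 1), fun h => ?_⟩
    exact (h 4 le_rfl).false (SimpleGraph.Embedding.map f _)

def tau : Fin 3 → Equiv.Perm (Fin 4) := ![1, Equiv.swap 0 1, Equiv.swap 1 2]

theorem tau_surj : ∀ σ : Equiv.Perm (Fin 4), ∃ c : Fin 3, ∀ u v,
    (SimpleGraph.cycleGraph 4).Adj (σ.symm u) (σ.symm v) ↔
      (SimpleGraph.cycleGraph 4).Adj ((tau c).symm u) ((tau c).symm v) := by
  decide +kernel

theorem tau_inj : ∀ c d : Fin 3, (∀ u v,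
    (SimpleGraph.cycleGraph 4).Adj ((tau c).symm u) ((tau c).symm v) ↔
      (SimpleGraph.cycleGraph 4).Adj ((tau d).symm u) ((tau d).symm v)) → c = d := by
  decide +kernel

theorem map_perm_adj (σ : Equiv.Perm (Fin 4)) (u v : Fin 4) :
    ((SimpleGraph.cycleGraph 4).map σ.toEmbedding).Adj u v ↔
    (SimpleGraph.cycleGraph 4).Adj (σ.symm u) (σ.symm v) := by
  have h := SimpleGraph.map_adj_apply (G := SimpleGraph.cycleGraph 4) (f := σ.toEmbedding)
    (a := σ.symm u) (b := σ.symm v)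
  simpa using h

/-- A graph from a 4-subset and one of three matchings. -/
noncomputable def mk4 (p : ℕ) (x : {s : Finset (Fin p) // s.card = 4} × Fin 3) :
    SimpleGraph (Fin p) :=
  ((SimpleGraph.cycleGraph 4).map (tau x.2).toEmbedding).map
    (x.1.1.orderEmbOfFin x.1.2).toEmbedding

theorem cyc_nonisol : ∀ u : Fin 4, ∃ v, (SimpleGraph.cycleGraph 4).Adj u v := by
  decide +kernel

theorem mk4_supp (p : ℕ) (x : {s : Finset (Fin p) // s.card = 4} × Fin 3) (a : Fin p) :
    a ∈ x.1.1 ↔ ∃ b, (mk4 p x).Adj a b := by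
  constructor
  · intro ha
    have : a ∈ Set.range (x.1.1.orderEmbOfFin x.1.2) := by simpa using ha
    obtain ⟨i, rfl⟩ := this
    obtain ⟨j, hj⟩ := cyc_nonisol ((tau x.2).symm i)
    refine ⟨x.1.1.orderEmbOfFin x.1.2 (tau x.2 j), ?_⟩
    refine (SimpleGraph.map_adj _ _ _ _).2 ⟨i, tau x.2 j, ?_, rfl, rfl⟩
    rw [map_perm_adj]
    simpa using hj
  · rintro ⟨b, hb⟩
    obtain ⟨i, j, -, rfl, -⟩ := (SimpleGraph.map_adj _ _ _ _).1 hb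
    exact Finset.orderEmbOfFin_mem _ _ _

theorem mk4_inj (p : ℕ) : Function.Injective (mk4 p) := by
  rintro ⟨⟨s, hs⟩, c⟩ ⟨⟨t, ht⟩, d⟩ h
  obtain rfl : s = t := by
    ext a
    have h1 := mk4_supp p ⟨⟨s, hs⟩, c⟩ a
    have h2 := mk4_supp p ⟨⟨t, ht⟩, d⟩ a
    rw [h] at h1
    exact h1.trans h2.symm
  have h' := SimpleGraph.map_injective _ h
  obtain rfl : c = d := by
    apply tau_inj
    intro u v
    rw [← map_perm_adj, ← map_perm_adj]
    simp only at h'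
    rw [h']
  rfl

theorem mk4_range (p : ℕ) (G : SimpleGraph (Fin p)) :
    (∃ x, mk4 p x = G) ↔ ∃ f : Fin 4 ↪ Fin p, G = (SimpleGraph.cycleGraph 4).map f := by
  constructor
  · rintro ⟨x, rfl⟩
    exact ⟨(tau x.2).toEmbedding.trans (x.1.1.orderEmbOfFin x.1.2).toEmbedding,
      SimpleGraph.map_map _ _ _⟩
  · rintro ⟨g, rfl⟩
    have hs : (Finset.univ.map g).card = 4 := by simp
    have hex : ∀ i, ∃ j, (Finset.univ.map g).orderEmbOfFin hs j = g i := by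
      intro i
      have : g i ∈ Set.range ((Finset.univ.map g).orderEmbOfFin hs) := by
        rw [Finset.range_orderEmbOfFin]; simp
      exact this
    choose s hsg using hex
    have sinj : Function.Injective s := by
      intro a b hab
      apply g.injective
      rw [← hsg, ← hsg, hab]
    let σ : Equiv.Perm (Fin 4) := Equiv.ofBijective s (Finite.injective_iff_bijective.1 sinj)
    obtain ⟨c, hc⟩ := tau_surj σ
    refine ⟨⟨⟨_, hs⟩, c⟩, ?_⟩
    have e : (SimpleGraph.cycleGraph 4).map (tau c).toEmbedding =
        (SimpleGraph.cycleGraph 4).map σ.toEmbedding := by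
      ext u v
      rw [map_perm_adj, map_perm_adj, hc]
    unfold mk4
    simp only
    rw [e, SimpleGraph.map_map]
    congr 1
    ext i
    exact congrArg Fin.val (hsg i)

theorem F_p_four (p : ℕ) (hp : 4 ≤ p) : Fcount p 4 = 3 * Nat.choose p 4 := by
  unfold Fcount
  have e : {G : SimpleGraph (Fin p) // G.edgeSet.ncard = 4 ∧ ¬ IsChordal G} ≃
      {s : Finset (Fin p) // s.card = 4} × Fin 3 :=
    (Equiv.subtypeEquivRight (fun G =>
      (nonchordal_iff p G).trans (mk4_range p G).symm)).trans
      (Equiv.ofInjective _ (mk4_inj p)).symm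
  rw [Nat.card_congr e, Nat.card_prod, Nat.card_eq_fintype_card, Fintype.card_finset_len]
  simp [mul_comm]
end

section
/- For every natural number p ≥ 4, setting r = p(p−1)/2, the number of non-chordal simple graphs on Fin p having exactly r − 2 edges equals the number of non-chordal simple graphs on Fin p having exactly 4 edges; both equal 3 · C(p,4). (Paper's Lemma 2, part 2: F_{p,r−2} = F_{p,4}.) -/
open SimpleGraph

abbrev autS (H : SimpleGraph (Fin 4)) [DecidableRel H.Adj] : Finset (Equiv.Perm (Fin 4)) :=
  Finset.univ.filter (fun σ => ∀ i j, H.Adj (σ i) (σ j) ↔ H.Adj i j)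

lemma autC : (autS (cycleGraph 4)).card = 8 := by decide +kernel
lemma autC' : (autS (cycleGraph 4)ᶜ).card = 8 := by decide +kernel
lemma eC : (cycleGraph 4).edgeSet.ncard = 4 := by
  have : (cycleGraph 4).edgeFinset.card = 4 := by decide +kernel
  rw [← coe_edgeFinset, Set.ncard_coe_finset]
  exact this
lemma eC' : (cycleGraph 4)ᶜ.edgeSet.ncard = 2 := by
  have : (cycleGraph 4)ᶜ.edgeFinset.card = 2 := by decide +kernel
  rw [← coe_edgeFinset, Set.ncard_coe_finset]
  exact this

lemma ncard_map {p : ℕ} (H : SimpleGraph (Fin 4)) (f : Fin 4 ↪ Fin p) :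
    (H.map f).edgeSet.ncard = H.edgeSet.ncard := by
  rw [edgeSet_map, Set.ncard_image_of_injective _ f.sym2Map.injective]

open Classical in
lemma card_range (p : ℕ) (H : SimpleGraph (Fin 4)) [DecidableRel H.Adj]
    (hH : ∀ i, ∃ j, H.Adj i j) (hA : (autS H).card = 8) :
    (Set.range (fun f : Fin 4 ↪ Fin p => H.map f)).ncard = 3 * p.choose 4 := by
  have hfib : ∀ b ∈ (Finset.univ : Finset (Fin 4 ↪ Fin p)).image (fun f : Fin 4 ↪ Fin p => H.map f),
      ((Finset.univ : Finset (Fin 4 ↪ Fin p)).filter (fun g : Fin 4 ↪ Fin p => H.map g = b)).card = 8 := by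
    intro b hb
    obtain ⟨f, -, rfl⟩ := Finset.mem_image.1 hb
    rw [← hA]
    symm
    apply Finset.card_bij (fun σ _ => σ.toEmbedding.trans f)
    · intro σ hσ
      simp only [autS, Finset.mem_filter, Finset.mem_univ, true_and] at hσ ⊢
      ext a b
      simp only [map_adj]
      constructor
      · rintro ⟨i, j, h, rfl, rfl⟩
        exact ⟨σ i, σ j, (hσ i j).2 h, rfl, rfl⟩
      · rintro ⟨i, j, h, rfl, rfl⟩
        refine ⟨σ.symm i, σ.symm j, (hσ _ _).1 (by simpa using h), by simp, by simp⟩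
    · intro σ _ τ _ h
      ext i
      have := DFunLike.congr_fun h i
      simpa using congrArg Fin.val (f.injective this)
    · intro g hg
      simp only [Finset.mem_filter, Finset.mem_univ, true_and] at hg
      have hex : ∀ i, ∃ i', f i' = g i := by
        intro i
        obtain ⟨j, hj⟩ := hH i
        have : (H.map g).Adj (g i) (g j) := map_adj_apply.2 hj
        rw [hg, map_adj] at this
        obtain ⟨u, v, -, hu, -⟩ := this
        exact ⟨u, hu⟩
      choose s hs using hex
      have hinj : Function.Injective s := by
        intro i j hij
        apply g.injective
        rw [← hs, ← hs, hij]
      refine ⟨Equiv.ofBijective s (Finite.injective_iff_bijective.1 hinj), ?_, ?_⟩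
      · simp only [autS, Finset.mem_filter, Finset.mem_univ, true_and, Equiv.ofBijective_apply]
        intro i j
        rw [← map_adj_apply (f := f), hs, hs, ← hg, map_adj_apply]
      · ext i
        simp [hs]
  have h1 := Finset.card_eq_sum_card_image (fun f : Fin 4 ↪ Fin p => H.map f) Finset.univ
  rw [Finset.sum_congr rfl hfib, Finset.sum_const, Finset.card_univ, Fintype.card_embedding_eq,
    Nat.descFactorial_eq_factorial_mul_choose] at h1
  have h2 : (Set.range (fun f : Fin 4 ↪ Fin p => H.map f)).ncard
      = ((Finset.univ : Finset (Fin 4 ↪ Fin p)).image (fun f : Fin 4 ↪ Fin p => H.map f)).card := by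
    rw [← Set.ncard_coe_finset]; simp
  rw [h2]
  simp [Nat.factorial] at h1
  omega

lemma ncard_le_of_emb {n p : ℕ} {A : SimpleGraph (Fin n)} {G : SimpleGraph (Fin p)} (e : A ↪g G) :
    A.edgeSet.ncard ≤ G.edgeSet.ncard := by
  rw [← Nat.card_coe_set_eq, ← Nat.card_coe_set_eq]
  exact Nat.card_le_card_of_injective _ e.mapEdgeSet.injective

lemma cyc_edges_s1 (m : ℕ) : 5 ≤ (cycleGraph (m + 5)).edgeSet.ncard := by
  have h := (cycleGraph (m + 5)).sum_degrees_eq_twice_card_edges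
  have hd : ∀ v, (cycleGraph (m + 5)).degree v = 2 := fun v => cycleGraph_degree_three_le (n := m + 2)
  simp only [hd] at h
  rw [← coe_edgeFinset, Set.ncard_coe_finset]
  simp at h
  simp
  omega

lemma cyc_compl_edges (m : ℕ) : 5 ≤ (cycleGraph (m + 5))ᶜ.edgeSet.ncard := by
  have h := (cycleGraph (m + 5))ᶜ.sum_degrees_eq_twice_card_edges
  have hd : ∀ v, (cycleGraph (m + 5)).degree v = 2 := fun v => cycleGraph_degree_three_le (n := m + 2)
  simp only [degree_compl, hd] at h
  rw [← coe_edgeFinset, Set.ncard_coe_finset]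
  simp only [Finset.sum_const, Finset.card_univ, Fintype.card_fin, smul_eq_mul] at h
  have : (m + 5) * 2 ≤ (m + 5) * (m + 5 - 1 - 2) := Nat.mul_le_mul_left _ (by omega)
  omega

lemma map_eq_of_emb {p : ℕ} {H : SimpleGraph (Fin 4)} {G : SimpleGraph (Fin p)} (e : H ↪g G)
    (h : G.edgeSet.ncard = H.edgeSet.ncard) : H.map e.toEmbedding = G := by
  rw [← edgeSet_inj]
  apply Set.eq_of_subset_of_ncard_le
  · rw [edgeSet_subset_edgeSet]
    intro a b hab
    obtain ⟨i, j, hij, rfl, rfl⟩ := (map_adj _ _ _ _).1 hab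
    exact e.map_adj_iff.2 hij
  · rw [ncard_map, h]
  · exact Set.toFinite _

lemma count4 (p : ℕ) : Fcount p 4 = 3 * p.choose 4 := by
  rw [← card_range p (cycleGraph 4) (by decide) autC, ← Nat.card_coe_set_eq, Fcount]
  congr 2
  ext G
  simp only [Set.mem_range]
  constructor
  · rintro ⟨hc, hn⟩
    simp only [IsChordal, not_forall, not_isEmpty_iff] at hn
    obtain ⟨n, hn, ⟨e⟩⟩ := hn
    have h4 : n = 4 := by
      by_contra hne
      obtain ⟨m, rfl⟩ : ∃ m, n = m + 5 := ⟨n - 5, by omega⟩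
      have := ncard_le_of_emb e
      have := cyc_edges_s1 m
      omega
    subst h4
    exact ⟨e.toEmbedding, map_eq_of_emb e (hc.trans eC.symm)⟩
  · rintro ⟨f, rfl⟩
    refine ⟨(ncard_map _ f).trans eC, fun h => ?_⟩
    exact (h 4 le_rfl).false (Embedding.map f _)

lemma compl_count (p : ℕ) (G : SimpleGraph (Fin p)) :
    G.edgeSet.ncard + Gᶜ.edgeSet.ncard = p.choose 2 := by
  classical
  have h := card_edgeFinset_top_eq_card_choose_two (V := Fin p)
  rw [Fintype.card_fin, ← Set.ncard_coe_finset, coe_edgeFinset] at h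
  rw [← h, ← Set.ncard_union_eq, ← edgeSet_sup, sup_compl_eq_top]
  rw [disjoint_edgeSet]
  exact disjoint_compl_right

lemma count2 (p r : ℕ) (hp : 4 ≤ p) (hr : r = p.choose 2) : Fcount p (r - 2) = 3 * p.choose 4 := by
  rw [← card_range p (cycleGraph 4)ᶜ (by decide) autC', ← Nat.card_coe_set_eq, Fcount]
  have hr2 : 6 ≤ r := by
    rw [hr]
    exact (Nat.choose_le_choose 2 hp)
  refine Nat.card_congr (Equiv.subtypeEquiv ⟨compl, compl, compl_compl, compl_compl⟩ ?_)
  intro G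
  have hG := compl_count p G
  rw [← hr] at hG
  simp only [Set.mem_range, Equiv.coe_fn_mk]
  constructor
  · rintro ⟨hc, hn⟩
    simp only [IsChordal, not_forall, not_isEmpty_iff] at hn
    obtain ⟨n, hn, ⟨e⟩⟩ := hn
    have h4 : n = 4 := by
      by_contra hne
      obtain ⟨m, rfl⟩ : ∃ m, n = m + 5 := ⟨n - 5, by omega⟩
      have := ncard_le_of_emb (Embedding.complEquiv e)
      have := cyc_compl_edges m
      omega
    subst h4
    exact ⟨(Embedding.complEquiv e).toEmbedding,
      map_eq_of_emb (Embedding.complEquiv e) (by rw [eC']; omega)⟩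
  · rintro ⟨f, hf⟩
    have h2 := (ncard_map (cycleGraph 4)ᶜ f).trans eC'
    rw [hf] at h2
    refine ⟨by omega, fun h => ?_⟩
    have e := Embedding.map f (cycleGraph 4)ᶜ
    rw [hf] at e
    exact (h 4 le_rfl).false (Embedding.complEquiv.symm e)

theorem F_p_r_sub_two (p : ℕ) (hp : 4 ≤ p) (r : ℕ) (hr : r = p * (p - 1) / 2) :
    Fcount p (r - 2) = Fcount p 4 ∧ Fcount p (r - 2) = 3 * Nat.choose p 4 := by
  have h := count2 p r hp (hr.trans (Nat.choose_two_right p).symm)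
  exact ⟨h.trans (count4 p).symm, h⟩
end

section
/- Let G be a chordal simple graph on a finite vertex set, let i and j be adjacent vertices of G, and suppose the graph G′ obtained from G by deleting the single edge {i, j} is also chordal. Then the edge {i, j} is contained in exactly one maximal clique of G: there is a unique vertex set C such that C is a clique of G, C is maximal among cliques of G under inclusion, and i ∈ C and j ∈ C. (Paper's Theorem 4(a), attributed to Frydenberg and Lauritzen.) -/
/-- If `G` is chordal and deleting the edge `{i, j}` of `G` leaves a chordal graph, then
the edge `{i, j}` lies in a unique maximal clique of `G`. -/
theorem edge_in_unique_maximal_clique {V : Type*} [Fintype V] (G : SimpleGraph V)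
    (hG : IsChordal G) (i j : V) (hij : G.Adj i j)
    (hG' : IsChordal (G.deleteEdges {s(i, j)})) :
    ∃! C : Set V, G.IsClique C ∧ (∀ D : Set V, G.IsClique D → C ⊆ D → D = C) ∧ i ∈ C ∧ j ∈ C := by
  classical
  have key : ∀ a b, G.Adj i a → G.Adj j a → G.Adj i b → G.Adj j b → a ≠ b → G.Adj a b := by
    intro a b hia hja hib hjb hab
    by_contra hn
    have hn' : ¬ G.Adj b a := fun h => hn h.symm
    refine (hG' 4 le_rfl).false ⟨⟨![i, a, j, b], ?_⟩, ?_⟩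
    · intro x y h
      have h1 := hij.ne
      have h2 := hia.ne
      have h3 := hja.ne
      have h4 := hib.ne
      have h5 := hjb.ne
      have h6 := h1.symm
      have h7 := h2.symm
      have h8 := h3.symm
      have h9 := h4.symm
      have h10 := h5.symm
      have h11 := hab.symm
      fin_cases x <;> fin_cases y <;> simp_all
    · intro x y
      change (G.deleteEdges {s(i, j)}).Adj (![i, a, j, b] x) (![i, a, j, b] y) ↔ _
      have c : (SimpleGraph.cycleGraph 4).Adj x y ↔ (x.val + y.val) % 2 = 1 := by
        revert x y
        decide
      rw [c]
      have h1 := hij.ne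
      have h2 := hia.ne
      have h3 := hja.ne
      have h4 := hib.ne
      have h5 := hjb.ne
      have h7 := h2.symm
      have h8 := h3.symm
      have h9 := h4.symm
      have h10 := h5.symm
      have a1 := hia.symm
      have a2 := hja.symm
      have a3 := hib.symm
      have a4 := hjb.symm
      fin_cases x <;> fin_cases y <;>
        simp [SimpleGraph.deleteEdges_adj, *]
  have hsub : ∀ D : Set V, G.IsClique D → i ∈ D → j ∈ D →
      D ⊆ {v | (v = i ∨ G.Adj i v) ∧ (v = j ∨ G.Adj j v)} := by
    intro D hD hi hj v hv
    refine ⟨?_, ?_⟩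
    · by_cases h : v = i
      · exact Or.inl h
      · exact Or.inr (hD hi hv (Ne.symm h))
    · by_cases h : v = j
      · exact Or.inl h
      · exact Or.inr (hD hj hv (Ne.symm h))
  have hcl : G.IsClique {v | (v = i ∨ G.Adj i v) ∧ (v = j ∨ G.Adj j v)} := by
    rintro a ⟨ha1, ha2⟩ b ⟨hb1, hb2⟩ hab
    rcases ha1 with rfl | ha1
    · rcases hb1 with rfl | hb1
      · exact absurd rfl hab
      · exact hb1
    rcases ha2 with rfl | ha2
    · rcases hb2 with rfl | hb2
      · exact absurd rfl hab
      · exact hb2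
    rcases hb1 with rfl | hb1
    · exact ha1.symm
    rcases hb2 with rfl | hb2
    · exact ha2.symm
    exact key a b ha1 ha2 hb1 hb2 hab
  have hi : i ∈ {v | (v = i ∨ G.Adj i v) ∧ (v = j ∨ G.Adj j v)} := ⟨Or.inl rfl, Or.inr hij.symm⟩
  have hj : j ∈ {v | (v = i ∨ G.Adj i v) ∧ (v = j ∨ G.Adj j v)} := ⟨Or.inr hij, Or.inl rfl⟩
  refine ⟨_, ⟨hcl, ?_, hi, hj⟩, ?_⟩
  · intro D hD hCD
    exact (hsub D hD (hCD hi) (hCD hj)).antisymm hCD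
  · rintro D ⟨hD, hmax, hDi, hDj⟩
    exact (hmax _ hcl (hsub D hD hDi hDj)).symm
end

section
/- For every p ≥ 4, every chordal simple graph H on Fin p that contains the p-cycle as a subgraph (cycleGraph p ≤ H) has at least 2p − 3 edges; equivalently, turning the chordless p-cycle into a chordal graph by adding edges ('fill-ins') requires at least p − 3 additional edges. (The paper asserts that the p-cycle 'requires a minimum of p−3 fill ins'.) -/
open Classical in
noncomputable def edgePairs {V : Type*} (H : SimpleGraph V) (S : Finset V) : Finset (V × V) :=
  (S ×ˢ S).filter (fun e => H.Adj e.1 e.2)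

lemma mem_edgePairs {V : Type*} (H : SimpleGraph V) (S : Finset V) (e : V × V) :
    e ∈ edgePairs H S ↔ (e.1 ∈ S ∧ e.2 ∈ S) ∧ H.Adj e.1 e.2 := by
  simp [edgePairs]

lemma cyc_adj {n : ℕ} (hn : 3 ≤ n) (u v : Fin n) :
    (SimpleGraph.cycleGraph n).Adj u v ↔
      (u.val + 1 = v.val ∨ v.val + 1 = u.val ∨ (u.val = 0 ∧ v.val + 1 = n) ∨
        (v.val = 0 ∧ u.val + 1 = n)) := by
  rw [SimpleGraph.cycleGraph_adj']
  have hu := u.2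
  have hv := v.2
  rcases lt_trichotomy u v with h | h | h
  · rw [Fin.coe_sub_iff_lt.2 h, Fin.coe_sub_iff_le.2 h.le]
    have := Fin.lt_def.1 h
    omega
  · subst h
    rw [Fin.coe_sub_iff_le.2 le_rfl]
    omega
  · rw [Fin.coe_sub_iff_lt.2 h, Fin.coe_sub_iff_le.2 h.le]
    have := Fin.lt_def.1 h
    omega

lemma exists_chord {V : Type*} (H : SimpleGraph V) (hH : IsChordal H) (n : ℕ) (hn : 4 ≤ n)
    (f : ℕ → V) (inj : ∀ a b, a < n → b < n → f a = f b → a = b)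
    (hadj : ∀ a, a + 1 < n → H.Adj (f a) (f (a + 1))) (hlast : H.Adj (f 0) (f (n - 1))) :
    ∃ i j, i + 1 < j ∧ j < n ∧ ¬ (i = 0 ∧ j = n - 1) ∧ H.Adj (f i) (f j) := by
  by_contra hc
  push Not at hc
  refine (hH n hn).false ⟨⟨fun k => f k.val, fun a b h => Fin.ext (inj _ _ a.2 b.2 h)⟩, ?_⟩
  have key : ∀ a b : ℕ, a < b → b < n → H.Adj (f a) (f b) → a + 1 = b ∨ (a = 0 ∧ b + 1 = n) := by
    intro a b hab hb h
    by_contra h'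
    exact hc a b (by omega) hb (by omega) h
  intro a b
  rw [cyc_adj (by omega)]
  have ha := a.2
  have hb := b.2
  change H.Adj (f a.val) (f b.val) ↔ _
  constructor
  · intro h
    rcases lt_trichotomy a.val b.val with h' | h' | h'
    · have := key _ _ h' hb h
      omega
    · rw [h'] at h
      exact absurd h (H.loopless.irrefl _)
    · have := key _ _ h' ha h.symm
      omega
  · rintro (h | h | ⟨h, h'⟩ | ⟨h, h'⟩)
    · rw [← h]; exact hadj _ (by omega)
    · rw [← h]; exact (hadj _ (by omega)).symm
    · rw [h, show b.val = n - 1 by omega]; exact hlast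
    · rw [h, show a.val = n - 1 by omega]; exact hlast.symm

lemma main_ind {V : Type*} [DecidableEq V] (H : SimpleGraph V) (hH : IsChordal H) (n : ℕ) :
    3 ≤ n → ∀ (f : ℕ → V), (∀ a b, a < n → b < n → f a = f b → a = b) →
    (∀ a, a + 1 < n → H.Adj (f a) (f (a + 1))) → H.Adj (f 0) (f (n - 1)) →
    4 * n ≤ (edgePairs H ((Finset.range n).image f)).card + 6 := by
  induction n using Nat.strong_induction_on with
  | _ n ih =>
  intro hn f inj hadj hlast
  rcases Nat.lt_or_ge n 4 with h4 | h4
  · obtain rfl : n = 3 := by omega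
    have : edgePairs H ((Finset.range 3).image f) = ((Finset.range 3).image f).offDiag := by
      ext e
      rw [mem_edgePairs, Finset.mem_offDiag, and_assoc]
      refine and_congr_right fun h1 => and_congr_right fun h2 => ⟨fun h => h.ne, fun h => ?_⟩
      obtain ⟨x, y⟩ := e
      simp only [Finset.mem_image, Finset.mem_range] at h1 h2
      obtain ⟨a, ha, rfl⟩ := h1
      obtain ⟨b, hb, rfl⟩ := h2
      have h01 := hadj 0 (by omega)
      have h12 := hadj 1 (by omega)
      have h02 := hlast
      interval_cases a <;> interval_cases b <;>
        first
        | exact absurd rfl h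
        | exact h01
        | exact h12
        | exact h02
        | exact h01.symm
        | exact h12.symm
        | exact h02.symm
    rw [this, Finset.offDiag_card, Finset.card_image_of_injOn]
    · simp
    · intro a ha b hb h
      simp only [Finset.coe_range, Set.mem_Iio] at ha hb
      exact inj a b ha hb h
  obtain ⟨i, j, hij, hj, hne, hc⟩ := exists_chord H hH n h4 f inj hadj hlast
  have I1 := ih (j - i + 1) (by omega) (by omega) (fun k => f (i + k))
    (fun a b ha hb h => by have := inj _ _ (by omega) (by omega) h; omega)
    (fun a ha => hadj (i + a) (by omega))
    (by simpa [show i + (j - i) = j by omega] using hc)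
  have I2 := ih (n - (j - i - 1)) (by omega) (by omega)
    (fun k => f (if k ≤ i then k else k + (j - i - 1)))
    (fun a b ha hb h => by
      have := inj _ _ (by split_ifs <;> omega) (by split_ifs <;> omega) h
      split_ifs at this <;> omega)
    (fun a ha => by
      rcases lt_trichotomy a i with h | h | h
      · simp only [h.le, if_true, show a + 1 ≤ i by omega]
        exact hadj a (by omega)
      · subst h
        simpa [show a + 1 + (j - a - 1) = j by omega] using hc
      · simp only [show ¬ a ≤ i by omega, if_false, show ¬ a + 1 ≤ i by omega]
        rw [show a + 1 + (j - i - 1) = a + (j - i - 1) + 1 by omega]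
        exact hadj _ (by omega))
    (by
      simp only [Nat.zero_le, if_true, show ¬ n - (j - i - 1) - 1 ≤ i by omega, if_false]
      rw [show n - (j - i - 1) - 1 + (j - i - 1) = n - 1 by omega]
      exact hlast)
  set S1 := (Finset.range (j - i + 1)).image (fun k => f (i + k)) with hS1
  set S2 := (Finset.range (n - (j - i - 1))).image
    (fun k => f (if k ≤ i then k else k + (j - i - 1))) with hS2
  have m1 : ∀ x ∈ S1, ∃ a, i ≤ a ∧ a ≤ j ∧ x = f a := by
    intro x hx
    simp only [hS1, Finset.mem_image, Finset.mem_range] at hx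
    obtain ⟨k, hk, rfl⟩ := hx
    exact ⟨i + k, by omega, by omega, rfl⟩
  have m2 : ∀ x ∈ S2, ∃ a, (a ≤ i ∨ j ≤ a) ∧ a < n ∧ x = f a := by
    intro x hx
    simp only [hS2, Finset.mem_image, Finset.mem_range] at hx
    obtain ⟨k, hk, rfl⟩ := hx
    exact ⟨_, by split_ifs <;> omega, by split_ifs <;> omega, rfl⟩
  have m12 : ∀ x, x ∈ S1 → x ∈ S2 → x ∈ ({f i, f j} : Finset V) := by
    intro x h1 h2
    obtain ⟨a, ha, ha', rfl⟩ := m1 x h1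
    obtain ⟨b, hb, hb', e⟩ := m2 _ h2
    have := inj a b (by omega) hb' e
    have : a = i ∨ a = j := by omega
    rcases this with rfl | rfl <;> simp
  have hU : edgePairs H S1 ∪ edgePairs H S2 ⊆ edgePairs H ((Finset.range n).image f) := by
    have s1 : ∀ x ∈ S1, x ∈ (Finset.range n).image f := by
      intro x hx
      obtain ⟨a, ha, ha', rfl⟩ := m1 x hx
      exact Finset.mem_image_of_mem _ (Finset.mem_range.2 (by omega))
    have s2 : ∀ x ∈ S2, x ∈ (Finset.range n).image f := by
      intro x hx
      obtain ⟨a, ha, ha', rfl⟩ := m2 x hx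
      exact Finset.mem_image_of_mem _ (Finset.mem_range.2 (by omega))
    intro e he
    rw [Finset.mem_union, mem_edgePairs, mem_edgePairs] at he
    rw [mem_edgePairs]
    rcases he with ⟨⟨h1, h2⟩, h⟩ | ⟨⟨h1, h2⟩, h⟩
    · exact ⟨⟨s1 _ h1, s1 _ h2⟩, h⟩
    · exact ⟨⟨s2 _ h1, s2 _ h2⟩, h⟩
  have hI : edgePairs H S1 ∩ edgePairs H S2 ⊆ ({f i, f j} : Finset V).offDiag := by
    intro e he
    rw [Finset.mem_inter, mem_edgePairs, mem_edgePairs] at he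
    obtain ⟨⟨⟨h1, h2⟩, h⟩, ⟨⟨h1', h2'⟩, -⟩⟩ := he
    rw [Finset.mem_offDiag]
    exact ⟨m12 _ h1 h1', m12 _ h2 h2', h.ne⟩
  have c1 := Finset.card_le_card hU
  have c2 := Finset.card_le_card hI
  rw [Finset.offDiag_card, Finset.card_pair hc.ne] at c2
  have c3 := Finset.card_union_add_card_inter (edgePairs H S1) (edgePairs H S2)
  omega

/-- Any chordal graph on `Fin p` containing the `p`-cycle as a subgraph has at least
`2p - 3` edges: chordalizing the `p`-cycle requires at least `p - 3` fill-in edges. -/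
theorem cycle_fill_in_lower_bound (p : ℕ) (hp : 4 ≤ p) (H : SimpleGraph (Fin p))
    (hH : IsChordal H) (hsub : SimpleGraph.cycleGraph p ≤ H) :
    2 * p - 3 ≤ H.edgeSet.ncard := by
  classical
  have hm : ∀ a, a < p → a % p = a := fun a ha => Nat.mod_eq_of_lt ha
  have key := main_ind H hH p (by omega) (fun k => ⟨k % p, Nat.mod_lt _ (by omega)⟩)
    (fun a b ha hb h => by simpa [hm a ha, hm b hb] using h)
    (fun a ha => hsub ((cyc_adj (by omega) _ _).2 (by
      left; simp only [hm a (by omega), hm (a + 1) ha])))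
    (hsub ((cyc_adj (by omega) _ _).2 (by
      right; right; left
      exact ⟨hm 0 (by omega), by have := hm (p - 1) (by omega); change (p - 1) % p + 1 = p; omega⟩)))
  have le : (edgePairs H ((Finset.range p).image
      (fun k => (⟨k % p, Nat.mod_lt _ (by omega)⟩ : Fin p)))).card ≤ Fintype.card H.Dart := by
    rw [← Finset.card_univ]
    refine (Finset.card_le_card ?_).trans
      (Finset.card_image_le (s := Finset.univ) (f := fun d : H.Dart => d.toProd))
    intro e he
    rw [mem_edgePairs] at he
    exact Finset.mem_image.2 ⟨⟨e, he.2⟩, Finset.mem_univ _, rfl⟩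
  rw [SimpleGraph.dart_card_eq_twice_card_edges] at le
  have : H.edgeSet.ncard = H.edgeFinset.card := by
    rw [← SimpleGraph.coe_edgeFinset, Set.ncard_coe_finset]
  omega
end

section
/- Let p ≥ 4, set r = p(p−1)/2, and let G be a simple graph on Fin p with exactly r − 2 edges (i.e. exactly two missing vertex pairs). Then G is not chordal if and only if the two missing pairs are vertex-disjoint, i.e. there exist four pairwise distinct vertices a, b, c, d with ¬G.Adj a b and ¬G.Adj c d. (This is the content of the proof of the paper's Lemma 2, part 2: a graph with r−2 edges is nondecomposable exactly when its two non-edges are the chords of a 4-cycle.) -/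
/-- A graph on `Fin p` with `r - 2` edges (`r = p(p-1)/2` the maximum) is non-chordal
exactly when its two missing vertex pairs are vertex-disjoint. -/
theorem not_chordal_iff_of_card_r_sub_two (p : ℕ) (hp : 4 ≤ p) (r : ℕ)
    (hr : r = p * (p - 1) / 2) (G : SimpleGraph (Fin p)) (hG : G.edgeSet.ncard = r - 2) :
    ¬ IsChordal G ↔
      ∃ a b c d : Fin p, a ≠ b ∧ a ≠ c ∧ a ≠ d ∧ b ≠ c ∧ b ≠ d ∧ c ≠ d ∧
        ¬ G.Adj a b ∧ ¬ G.Adj c d := by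
  constructor
  · intro h
    simp only [IsChordal, not_forall, not_isEmpty_iff] at h
    obtain ⟨n, hn, ⟨f⟩⟩ := h
    have key : ∀ i j : Fin n, i.val + 2 = j.val → j.val ≤ 3 → ¬ G.Adj (f i) (f j) := by
      intro i j hij hj
      rw [f.map_adj_iff, SimpleGraph.cycleGraph_adj']
      have h1 : (j - i).val = 2 := by
        rw [Fin.sub_val_of_le (by rw [Fin.le_def]; omega)]; omega
      have h2 : (i - j).val = n - 2 := by
        rw [Fin.val_sub]
        have : n - j.val + i.val = n - 2 := by omega
        rw [this, Nat.mod_eq_of_lt (by omega)]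
      omega
    have ne : ∀ i j : Fin n, i.val ≠ j.val → f i ≠ f j := by
      intro i j hij h
      exact hij (congrArg Fin.val (f.injective h))
    refine ⟨f ⟨0, by omega⟩, f ⟨2, by omega⟩, f ⟨1, by omega⟩, f ⟨3, by omega⟩,
      ne _ _ (by simp), ne _ _ (by simp), ne _ _ (by simp), ne _ _ (by simp),
      ne _ _ (by simp), ne _ _ (by simp), key _ _ rfl (by simp), key _ _ rfl (by simp)⟩
  · rintro ⟨a, b, c, d, hab, hac, had, hbc, hbd, hcd, nab, ncd⟩ hch
    have hsum : G.edgeSet.ncard + Gᶜ.edgeSet.ncard = r := by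
      rw [← Set.ncard_union_eq _ (Set.toFinite _) (Set.toFinite _)]
      · rw [← SimpleGraph.edgeSet_sup, sup_compl_eq_top]
        classical
        rw [← SimpleGraph.coe_edgeFinset, Set.ncard_coe_finset,
          SimpleGraph.card_edgeFinset_top_eq_card_choose_two, Fintype.card_fin,
          Nat.choose_two_right, hr]
      · rw [SimpleGraph.disjoint_edgeSet]
        exact disjoint_compl_right
    have hr2 : 2 ≤ r := by
      rw [hr, Nat.le_div_iff_mul_le (by norm_num)]
      exact le_trans (by norm_num) (Nat.mul_le_mul hp (show 3 ≤ p - 1 by omega))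
    have hc2 : Gᶜ.edgeSet.ncard = 2 := by omega
    have hsub : ({s(a, b), s(c, d)} : Set (Sym2 (Fin p))) ⊆ Gᶜ.edgeSet := by
      rintro e (rfl | rfl)
      · simp [hab, nab]
      · simp [hcd, ncd]
    have hpair : ({s(a, b), s(c, d)} : Set (Sym2 (Fin p))).ncard = 2 := by
      apply Set.ncard_pair
      simp [hac, had]
    have heq := Set.eq_of_subset_of_ncard_le hsub (by omega) (Set.toFinite _)
    have hadj : ∀ x y, x ≠ y → s(x, y) ≠ s(a, b) → s(x, y) ≠ s(c, d) → G.Adj x y := by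
      intro x y hxy h1 h2
      by_contra hn
      have : s(x, y) ∈ Gᶜ.edgeSet := by simp [hxy, hn]
      rw [← heq] at this
      rcases this with h | h
      · exact h1 h
      · exact h2 h
    have e1 : G.Adj a c := hadj _ _ hac (by rw [Ne, Sym2.eq_iff]; tauto) (by rw [Ne, Sym2.eq_iff]; tauto)
    have e2 : G.Adj a d := hadj _ _ had (by rw [Ne, Sym2.eq_iff]; tauto) (by rw [Ne, Sym2.eq_iff]; tauto)
    have e3 : G.Adj b c := hadj _ _ hbc (by rw [Ne, Sym2.eq_iff]; tauto) (by rw [Ne, Sym2.eq_iff]; tauto)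
    have e4 : G.Adj b d := hadj _ _ hbd (by rw [Ne, Sym2.eq_iff]; tauto) (by rw [Ne, Sym2.eq_iff]; tauto)
    have nba : ¬ G.Adj b a := fun h => nab h.symm
    have ndc : ¬ G.Adj d c := fun h => ncd h.symm
    refine (hch 4 le_rfl).false ⟨⟨![a, c, b, d], ?_⟩, ?_⟩
    · intro i j h
      fin_cases i <;> fin_cases j <;> simp_all
    · intro i j
      change G.Adj (![a, c, b, d] i) (![a, c, b, d] j) ↔ _
      fin_cases i <;> fin_cases j <;>
        simp [SimpleGraph.cycleGraph_adj', nab, ncd, nba, ndc, e1, e2, e3, e4,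
          e1.symm, e2.symm, e3.symm, e4.symm] <;> decide
end

section
/- Let G be a simple graph with exactly 4 edges. Then G is not chordal if and only if there exist four pairwise distinct vertices a, b, c, d such that the edge set of G is exactly { {a,b}, {b,c}, {c,d}, {d,a} }; that is, a 4-edge graph is non-chordal precisely when it consists of a chordless 4-cycle together with isolated vertices. (This is the content of the proof of the paper's Lemma 2, part 1.) -/
theorem cyc_le_four {V : Type*} (G : SimpleGraph V) (hG : G.edgeSet.ncard = 4) (m : ℕ)
    (f : SimpleGraph.cycleGraph (m + 4) ↪g G) : m = 0 := by
  have hadj : ∀ i : Fin (m+4), G.Adj (f i) (f (i+1)) := by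
    intro i
    rw [f.map_rel_iff]
    rw [SimpleGraph.cycleGraph_adj]
    right; simp
  have hinj : Function.Injective (fun i : Fin (m+4) => s(f i, f (i+1))) := by
    intro i j h
    simp only [Sym2.eq_iff] at h
    rcases h with h | ⟨h1, h2⟩
    · exact f.injective h.1
    · have h1 := f.injective h1
      have h2 := f.injective h2
      exfalso
      rw [h1, add_assoc] at h2
      have h3 : (1 + 1 : Fin (m+4)) = 0 := by simpa using h2
      have := congrArg Fin.val h3
      simp [Fin.val_add, Nat.mod_eq_of_lt] at this
  have hfin : G.edgeSet.Finite := Set.finite_of_ncard_ne_zero (by omega)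
  have hsub : Set.range (fun i : Fin (m+4) => s(f i, f (i+1))) ⊆ G.edgeSet := by
    rintro _ ⟨i, rfl⟩
    exact hadj i
  have h := Set.ncard_le_ncard hsub hfin
  rw [← Set.image_univ, Set.ncard_image_of_injective _ hinj, Set.ncard_univ, Nat.card_fin] at h
  omega

theorem not_chordal_iff_of_four_edges {V : Type*} (G : SimpleGraph V)
    (hG : G.edgeSet.ncard = 4) :
    ¬ IsChordal G ↔
      ∃ a b c d : V, a ≠ b ∧ a ≠ c ∧ a ≠ d ∧ b ≠ c ∧ b ≠ d ∧ c ≠ d ∧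
        G.edgeSet = {s(a, b), s(b, c), s(c, d), s(d, a)} := by
  constructor
  · intro h
    simp only [IsChordal, not_forall, not_isEmpty_iff] at h
    obtain ⟨n, hn, ⟨f⟩⟩ := h
    obtain ⟨m, rfl⟩ : ∃ m, n = m + 4 := ⟨n - 4, by omega⟩
    obtain rfl := cyc_le_four G hG m f
    have hne : ∀ i j : Fin 4, i ≠ j → f i ≠ f j := fun i j h h' => h (f.injective h')
    have hadj : ∀ i j : Fin 4, (SimpleGraph.cycleGraph 4).Adj i j → G.Adj (f i) (f j) :=
      fun i j h => f.map_rel_iff.2 h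
    have h01 := hne 0 1 (by decide)
    have h02 := hne 0 2 (by decide)
    have h03 := hne 0 3 (by decide)
    have h12 := hne 1 2 (by decide)
    have h13 := hne 1 3 (by decide)
    have h23 := hne 2 3 (by decide)
    refine ⟨f (0 : Fin 4), f (1 : Fin 4), f (2 : Fin 4), f (3 : Fin 4), h01, h02, h03, h12, h13, h23, ?_⟩
    have hfin : G.edgeSet.Finite := Set.finite_of_ncard_ne_zero (by omega)
    symm
    apply Set.eq_of_subset_of_ncard_le _ _ hfin
    · intro e he
      simp only [Set.mem_insert_iff, Set.mem_singleton_iff] at he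
      rcases he with rfl | rfl | rfl | rfl
      · exact hadj 0 1 (by decide)
      · exact hadj 1 2 (by decide)
      · exact hadj 2 3 (by decide)
      · exact hadj 3 0 (by decide)
    · rw [hG, Set.ncard_insert_of_notMem, Set.ncard_insert_of_notMem, Set.ncard_pair]
      all_goals
        simp only [Set.mem_insert_iff, Set.mem_singleton_iff, ne_eq, Sym2.eq_iff]
        grind
  · rintro ⟨a, b, c, d, hab, hac, had, hbc, hbd, hcd, hE⟩ h
    have hadj : ∀ x y, G.Adj x y ↔ s(x, y) ∈ ({s(a, b), s(b, c), s(c, d), s(d, a)} : Set (Sym2 V)) := by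
      intro x y; rw [← hE]; rfl
    simp only [Set.mem_insert_iff, Set.mem_singleton_iff, Sym2.eq_iff] at hadj
    refine (h 4 le_rfl).false ⟨⟨![a, b, c, d], ?_⟩, ?_⟩
    · intro i j hij
      fin_cases i <;> fin_cases j <;> simp_all
    · intro i j
      change G.Adj (![a, b, c, d] i) (![a, b, c, d] j) ↔ _
      rw [hadj]
      have key : (SimpleGraph.cycleGraph 4).Adj i j ↔ (i - j = 1 ∨ j - i = 1) :=
        SimpleGraph.cycleGraph_adj
      rw [key]
      fin_cases i <;> fin_cases j <;> simp <;> grind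
end
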